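/- arXiv:1705.06122 — 2 statements merged into one kernel-verified Lean document; each statement's English description precedes it below -/
import Mathlib

section
/- Let p be a prime and β ∈ ℚ_p algebraic over ℚ, irrational, with β ∈ pℤ_p, and suppose all conjugates of β lie in ℚ_p. Let T_b be Schneider's map T_b(β) = p^{ord_p(β)}/β − ω_p(p^{ord_p(β)}/β). If σ is a ℚ-embedding of ℚ(β) into ℚ_p with σ(β) ≠ β and ord_p(σ(T_b^m(β))) = ord_p(T_b^m(β)) for every m ≥ 0 (so σ follows the same digit sequence), then |β − σ(β)|_p < p^{−Σ_{k=0}^{m−1} ord_p(T_b^k β)} for every m, and hence β = σ(β), a contradiction. Consequently, for every irrational algebraic β ∈ pℤ_p there exists m such that for all n ≥ m, T_b^n(β) satisfies condition (H). -/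
/-!
The mechanism is a contraction estimate.  If two sequences `a`, `c` in an ultrametric field satisfy
the same Schneider recursion `x (n+1) = u n / x n - j n` with `‖u n‖ = ‖a n‖`, and `‖c n‖ = ‖a n‖`
for all `n`, then `‖a (n+1) - c (n+1)‖ = ‖a n - c n‖ / ‖a n‖`, so that
`‖a 0 - c 0‖ = (∏ k < m, ‖a k‖) * ‖a m - c m‖` (`dist_eq_prod_mul`).  As the `‖a k‖` are bounded by
some `r < 1`, this forces `a 0 = c 0` (`eq_of_norm_eq`).

If on the other hand `‖c m‖ ≠ ‖a m‖` for some `m`, then the ultrametric inequality pushes `c` to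
norm exactly `1` within two steps, and it stays there
(`eventually_norm_one`).  Apply this to `c n = σ (T^n β)` for each of the finitely many embeddings
`σ` of `ℚ(β)` into an algebraic closure of `ℚ_p`: for large `n`, all the conjugates of `T^n β` other
than `T^n β` itself have norm `1`.  Writing the minimal polynomial as `(X - T^n β) * Q` with `Q` a
product of factors `X - r`, `‖r‖ = 1`, the coefficients satisfy condition (H)
(`coeff_norm_of_roots`).
-/

open Polynomial

section Orbits

variable {L : Type*} [NormedField L] {u j a c : ℕ → L}

/-- The exact effect of the Schneider recursion on distances between sequences with equal norms. -/
lemma dist_eq_prod_mul (ha0 : ∀ n, a n ≠ 0) (hu : ∀ n, ‖u n‖ = ‖a n‖)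
    (ha : ∀ n, a (n + 1) = u n / a n - j n) (hc : ∀ n, c (n + 1) = u n / c n - j n)
    (hn : ∀ n, ‖c n‖ = ‖a n‖) (m : ℕ) :
    ‖a 0 - c 0‖ = (∏ k ∈ Finset.range m, ‖a k‖) * ‖a m - c m‖ := by
  induction m with
  | zero => simp
  | succ m ih =>
    have hc0 : c m ≠ 0 := by
      rw [← norm_ne_zero_iff, hn, norm_ne_zero_iff]; exact ha0 m
    have hpos : ‖a m‖ ≠ 0 := norm_ne_zero_iff.2 (ha0 m)
    have e : a (m + 1) - c (m + 1) = u m * (c m - a m) / (a m * c m) := by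
      have := ha0 m
      rw [ha, hc]; field_simp; ring
    rw [ih, Finset.prod_range_succ, e, norm_div, norm_mul, norm_mul, hu, hn, norm_sub_rev (c m)]
    field_simp

lemma eq_of_norm_eq (ha0 : ∀ n, a n ≠ 0) (hu : ∀ n, ‖u n‖ = ‖a n‖)
    (ha : ∀ n, a (n + 1) = u n / a n - j n) (hc : ∀ n, c (n + 1) = u n / c n - j n)
    (hn : ∀ n, ‖c n‖ = ‖a n‖) {r : ℝ} (hr : r < 1) (har : ∀ n, ‖a n‖ ≤ r) :
    c 0 = a 0 := by
  have hr0 : 0 ≤ r := (norm_nonneg _).trans (har 0)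
  have hb : ∀ m : ℕ, ‖a 0 - c 0‖ ≤ r ^ m * (r + r) := by
    intro m
    rw [dist_eq_prod_mul ha0 hu ha hc hn m]
    have h1 : (∏ k ∈ Finset.range m, ‖a k‖) ≤ r ^ m := by
      calc _ ≤ ∏ _k ∈ Finset.range m, r :=
            Finset.prod_le_prod (fun _ _ => norm_nonneg _) (fun k _ => har k)
        _ = r ^ m := by simp
    have h2 : ‖a m - c m‖ ≤ r + r :=
      (norm_sub_le _ _).trans (add_le_add (har m) ((hn m).trans_le (har m)))
    exact mul_le_mul h1 h2 (norm_nonneg _) (by positivity)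
  have ht : Filter.Tendsto (fun m : ℕ => r ^ m * (r + r)) Filter.atTop (nhds (0 * (r + r))) :=
    (tendsto_pow_atTop_nhds_zero_of_lt_one hr0 hr).mul_const _
  rw [zero_mul] at ht
  have h0 := ge_of_tendsto' ht hb
  exact (sub_eq_zero.1 (norm_le_zero_iff.1 h0)).symm

variable [IsUltrametricDist L]

lemma ultra_norm_sub_le_max (x y : L) : ‖x - y‖ ≤ max ‖x‖ ‖y‖ := by
  simpa [sub_eq_add_neg] using IsUltrametricDist.norm_add_le_max x (-y)

lemma norm_sub_eq_right_of_lt {x y : L} (h : ‖x‖ < ‖y‖) : ‖x - y‖ = ‖y‖ := by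
  rw [sub_eq_add_neg, IsUltrametricDist.norm_add_eq_max_of_norm_ne_norm (by simpa using h.ne),
    norm_neg, max_eq_right h.le]

/-- A sequence following the digits of `a` whose norm once differs from that of `a` ends up
on the unit sphere: a norm that is too large leads there in one step, a norm that is too small
becomes too large in one step. -/
lemma eventually_norm_one (ha0 : ∀ n, a n ≠ 0) (hu : ∀ n, ‖u n‖ = ‖a n‖)
    (ha : ∀ n, a (n + 1) = u n / a n - j n) (hc : ∀ n, c (n + 1) = u n / c n - j n)
    (ha1 : ∀ n, ‖a n‖ < 1) (hc0 : ∀ n, c n ≠ 0) (hne : ∃ m, ‖c m‖ ≠ ‖a m‖) :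
    ∃ M, ∀ n, M ≤ n → ‖c n‖ = 1 := by
  have hj : ∀ n, ‖j n‖ = 1 := by
    intro n
    have h1 : ‖u n / a n‖ = 1 := by
      rw [norm_div, hu, div_self (norm_ne_zero_iff.2 (ha0 n))]
    have h2 : j n = -(a (n + 1) - u n / a n) := by rw [ha]; ring
    rw [h2, norm_neg, norm_sub_eq_right_of_lt (by rw [h1]; exact ha1 _), h1]
  have big : ∀ n, ‖a n‖ < ‖c n‖ → ‖c (n + 1)‖ = 1 := by
    intro n h
    have h1 : ‖u n / c n‖ < ‖j n‖ := by
      rw [norm_div, hu, hj, div_lt_one (norm_pos_iff.2 (hc0 n))]; exact h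
    rw [hc, norm_sub_eq_right_of_lt h1, hj]
  have small : ∀ n, ‖c n‖ < ‖a n‖ → ‖a (n + 1)‖ < ‖c (n + 1)‖ := by
    intro n h
    have h1 : ‖j n‖ < ‖u n / c n‖ := by
      rw [norm_div, hu, hj, one_lt_div (norm_pos_iff.2 (hc0 n))]; exact h
    rw [hc, norm_sub_rev, norm_sub_eq_right_of_lt h1]
    exact (ha1 _).trans ((hj n).symm.trans_lt h1)
  have stay : ∀ M, ‖c M‖ = 1 → ∀ n, M ≤ n → ‖c n‖ = 1 := by
    intro M hM n hn
    induction n, hn using Nat.le_induction with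
    | base => exact hM
    | succ n _ ih => exact big n (by rw [ih]; exact ha1 n)
  obtain ⟨m, hm⟩ := hne
  rcases lt_or_gt_of_ne hm with h | h
  · exact ⟨m + 2, stay _ (big _ (small m h))⟩
  · exact ⟨m + 1, stay _ (big m h)⟩

/-- A product of factors `X - r` with `‖r‖ = 1` has integral coefficients and unit constant term. -/
lemma coeff_norm_prod (s : Multiset L) (hs : ∀ r ∈ s, ‖r‖ = 1) :
    (∀ i, ‖((s.map fun r => X - C r).prod).coeff i‖ ≤ 1) ∧
      ‖((s.map fun r => X - C r).prod).coeff 0‖ = 1 := by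
  induction s using Multiset.induction_on with
  | empty =>
    refine ⟨fun i => ?_, by simp⟩
    simp only [Multiset.map_zero, Multiset.prod_zero, coeff_one]
    split_ifs <;> simp
  | cons r s ih =>
    obtain ⟨h1, h0⟩ := ih fun x hx => hs x (Multiset.mem_cons_of_mem hx)
    have hr : ‖r‖ = 1 := hs r (Multiset.mem_cons_self r s)
    rw [Multiset.map_cons, Multiset.prod_cons]
    generalize (s.map fun r => X - C r).prod = Q at h1 h0
    have hz : ‖((X - C r) * Q).coeff 0‖ = 1 := by
      simp [mul_coeff_zero, hr, h0]
    refine ⟨fun i => ?_, hz⟩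
    cases i with
    | zero => exact hz.le
    | succ i =>
      rw [sub_mul, coeff_sub, coeff_X_mul, coeff_C_mul]
      refine (ultra_norm_sub_le_max _ _).trans (max_le (h1 i) ?_)
      rw [norm_mul, hr, one_mul]; exact h1 _

lemma coeff_norm_of_roots {P : L[X]} (hP : P.Monic) (hsplit : P.Splits) (hnodup : P.roots.Nodup)
    {x : L} (hx : x ∈ P.roots) (hx1 : ‖x‖ < 1) (hroots : ∀ r ∈ P.roots, r ≠ x → ‖r‖ = 1) :
    (∀ i, ‖P.coeff i‖ ≤ 1) ∧ ‖P.coeff 1‖ = 1 ∧ ‖P.coeff 0‖ < 1 := by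
  obtain ⟨s, hs⟩ := Multiset.exists_cons_of_mem hx
  have hxs : x ∉ s := by rw [hs] at hnodup; exact (Multiset.nodup_cons.1 hnodup).1
  have hs1 : ∀ r ∈ s, ‖r‖ = 1 := fun r hr =>
    hroots r (by rw [hs]; exact Multiset.mem_cons_of_mem hr) (by rintro rfl; exact hxs hr)
  obtain ⟨h1, h0⟩ := coeff_norm_prod s hs1
  have hPe := hsplit.eq_prod_roots_of_monic hP
  rw [hs, Multiset.map_cons, Multiset.prod_cons] at hPe
  generalize (s.map fun r => X - C r).prod = Q at h1 h0 hPe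
  have hxQ : ∀ i, ‖x * Q.coeff i‖ < 1 := fun i => by
    rw [norm_mul]
    exact (mul_le_of_le_one_right (norm_nonneg _) (h1 i)).trans_lt hx1
  have e0 : ‖P.coeff 0‖ < 1 := by
    rw [hPe, mul_coeff_zero]
    simpa using hxQ 0
  have es : ∀ i, P.coeff (i + 1) = Q.coeff i - x * Q.coeff (i + 1) := fun i => by
    rw [hPe, sub_mul, coeff_sub, coeff_X_mul, coeff_C_mul]
  refine ⟨fun i => ?_, ?_, e0⟩
  · cases i with
    | zero => exact e0.le
    | succ i =>
      rw [es]
      exact (ultra_norm_sub_le_max _ _).trans (max_le (h1 i) (hxQ _).le)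
  · rw [es 0, norm_sub_rev, norm_sub_eq_right_of_lt (by rw [h0]; exact hxQ _), h0]

end Orbits

section Padic

variable {p : ℕ} [Fact p.Prime]

lemma norm_pow_valuation {x : ℚ_[p]} (hx : x ≠ 0) : ‖(p : ℚ_[p]) ^ x.valuation‖ = ‖x‖ := by
  rw [Padic.norm_p_zpow, Padic.norm_eq_zpow_neg_valuation hx]

lemma norm_le_inv_of_lt_one {x : ℚ_[p]} (hx : ‖x‖ < 1) : ‖x‖ ≤ (p : ℝ)⁻¹ := by
  have := (Padic.norm_lt_pow_iff_norm_le_pow_sub_one x 0).1 (by simpa using hx)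
  simpa using this

lemma inv_prime_lt_one : (p : ℝ)⁻¹ < 1 :=
  inv_lt_one_of_one_lt₀ (by exact_mod_cast (Fact.out : p.Prime).one_lt)

/-- Iterating Schneider's map on an irrational `β ∈ pℤ_p` never reaches a rational number and
stays in `pℤ_p`; the digits `j` are chosen along the orbit. -/
lemma exists_orbit (T : ℚ_[p] → ℚ_[p])
    (hT : ∀ α : ℚ_[p], α ≠ 0 → ∃ j : ℕ, j < p ∧
      ‖(p : ℚ_[p]) ^ α.valuation / α - (j : ℚ_[p])‖ < 1 ∧
      T α = (p : ℚ_[p]) ^ α.valuation / α - (j : ℚ_[p]))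
    {β : ℚ_[p]} (hirr : ∀ q : ℚ, (q : ℚ_[p]) ≠ β) (hβ : ‖β‖ < 1) :
    (∀ m, T^[m] β ≠ 0) ∧ (∀ m, ‖T^[m] β‖ < 1) ∧
    ∃ j : ℕ → ℕ, ∀ m, j m < p ∧
      ‖(p : ℚ_[p]) ^ (T^[m] β).valuation / T^[m] β - (j m : ℚ_[p])‖ < 1 ∧
      T^[m + 1] β = (p : ℚ_[p]) ^ (T^[m] β).valuation / T^[m] β - (j m : ℚ_[p]) := by
  have key : ∀ m, (∀ q : ℚ, (q : ℚ_[p]) ≠ T^[m] β) ∧ ‖T^[m] β‖ < 1 := by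
    intro m
    induction m with
    | zero => exact ⟨hirr, hβ⟩
    | succ m ih =>
      have h0 : T^[m] β ≠ 0 := fun h => ih.1 0 (by simp [h])
      obtain ⟨j, -, hj1, hj2⟩ := hT _ h0
      rw [Function.iterate_succ_apply']
      refine ⟨fun q hq => ?_, by rw [hj2]; exact hj1⟩
      rw [hj2] at hq
      have hp : (p : ℚ_[p]) ^ (T^[m] β).valuation ≠ 0 :=
        zpow_ne_zero _ (by exact_mod_cast (Fact.out : p.Prime).ne_zero)
      -- inverting the step expresses `T^m β` rationally in terms of `q`
      have hq' : (q : ℚ_[p]) + j = (p : ℚ_[p]) ^ (T^[m] β).valuation / T^[m] β := by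
        rw [hq]; ring
      refine ih.1 ((p : ℚ) ^ (T^[m] β).valuation / (q + j)) ?_
      push_cast
      rw [hq', div_div_cancel₀ hp]
  have h0 : ∀ m, T^[m] β ≠ 0 := fun m h => (key m).1 0 (by simp [h])
  refine ⟨h0, fun m => (key m).2, ?_⟩
  choose j hj using fun m => hT _ (h0 m)
  refine ⟨j, fun m => ?_⟩
  rw [Function.iterate_succ_apply']
  exact hj m

end Padic

/-- Lemma 2 of the paper.  `T` is Schneider's map
`T(α) = p^{ord_p α}/α − ω_p(p^{ord_p α}/α)`, `T 0 = 0`.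
Part 1: if `g` encodes the iterates of a ℚ-embedding conjugate `σ(β)`
(`g 0 = σβ`, `g` follows the same digits, and `ord_p(g m) = ord_p(T^m β)` for all
`m`), then `‖β − σβ‖ < p^{−Σ_{k<m} ord_p(T^k β)}` for every `m ≥ 1`, whence
`σβ = β`.  Part 2 (consequence): for every irrational algebraic `β ∈ pℤ_p` there
is `m` such that `T^n β` satisfies condition (H) for all `n ≥ m`. -/
theorem stmt_18 (p : ℕ) [Fact p.Prime] (T : ℚ_[p] → ℚ_[p])
    (hT0 : T 0 = 0)
    (hT : ∀ α : ℚ_[p], α ≠ 0 → ∃ j : ℕ, j < p ∧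
      ‖(p : ℚ_[p]) ^ α.valuation / α - (j : ℚ_[p])‖ < 1 ∧
      T α = (p : ℚ_[p]) ^ α.valuation / α - (j : ℚ_[p])) :
    (∀ β : ℚ_[p], IsAlgebraic ℚ β → (∀ q : ℚ, (q : ℚ_[p]) ≠ β) → ‖β‖ < 1 →
      ∀ g : ℕ → ℚ_[p],
        (∀ m, ‖g m‖ = ‖T^[m] β‖) →
        (∀ m, ∀ j : ℕ, j < p →
          ‖(p : ℚ_[p]) ^ ((T^[m] β).valuation) / (T^[m] β) - (j : ℚ_[p])‖ < 1 →
          g (m + 1) = (p : ℚ_[p]) ^ ((T^[m] β).valuation) / g m - (j : ℚ_[p])) →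
        (∀ m : ℕ, 1 ≤ m →
          ‖β - g 0‖ < (p : ℝ) ^ (-(∑ k ∈ Finset.range m, (T^[k] β).valuation))) ∧
        g 0 = β) ∧
    (∀ β : ℚ_[p], IsAlgebraic ℚ β → (∀ q : ℚ, (q : ℚ_[p]) ≠ β) → ‖β‖ < 1 →
      ∃ m : ℕ, ∀ n : ℕ, m ≤ n →
        (∀ i : ℕ, ‖(((minpoly ℚ (T^[n] β)).coeff i : ℚ) : ℚ_[p])‖ ≤ 1) ∧
        ‖(((minpoly ℚ (T^[n] β)).coeff 1 : ℚ) : ℚ_[p])‖ = 1 ∧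
        ‖(((minpoly ℚ (T^[n] β)).coeff 0 : ℚ) : ℚ_[p])‖ < 1) := by
  refine ⟨fun β _ hirr hβ g hg hstep => ?_, fun β halg hirr hβ => ?_⟩
  · obtain ⟨h0, h1, j, hj⟩ := exists_orbit T hT hirr hβ
    have hu := fun m => norm_pow_valuation (h0 m)
    have ha := fun m => (hj m).2.2
    have hc := fun m => hstep m (j m) (hj m).1 (hj m).2.1
    refine ⟨fun m _ => ?_, ?_⟩
    · have hd := dist_eq_prod_mul (a := fun m => T^[m] β) (c := g) (j := fun m => (j m : ℚ_[p]))
        h0 hu ha hc hg m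
      have hp0 : (p : ℝ) ≠ 0 := by exact_mod_cast (Fact.out : p.Prime).ne_zero
      have hprod : (∏ k ∈ Finset.range m, ‖T^[k] β‖)
          = (p : ℝ) ^ (-(∑ k ∈ Finset.range m, (T^[k] β).valuation)) := by
        clear hd
        induction m with
        | zero => simp
        | succ m ih =>
          rw [Finset.prod_range_succ, Finset.sum_range_succ, neg_add, zpow_add₀ hp0,
            Padic.norm_eq_zpow_neg_valuation (h0 m)]
          rcases Nat.eq_zero_or_pos m with rfl | hm
          · simp
          · rw [ih hm]
      have hlt : ‖T^[m] β - g m‖ < 1 := by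
        refine (ultra_norm_sub_le_max _ _).trans_lt (max_lt (h1 m) ?_)
        rw [hg]; exact h1 m
      change ‖β - g 0‖ = _ at hd
      rw [hd, hprod]
      have hp : (0 : ℝ) < p := by exact_mod_cast (Fact.out : p.Prime).pos
      exact mul_lt_of_lt_one_right (zpow_pos hp _) hlt
    · exact eq_of_norm_eq (a := fun m => T^[m] β) (c := g) (j := fun m => (j m : ℚ_[p]))
        h0 hu ha hc hg inv_prime_lt_one (fun m => norm_le_inv_of_lt_one (h1 m))
  · obtain ⟨h0, h1, j, hj⟩ := exists_orbit T hT hirr hβ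
    let K := IntermediateField.adjoin ℚ {β}
    have hint : IsIntegral ℚ β := halg.isIntegral
    have : FiniteDimensional ℚ K := IntermediateField.adjoin.finiteDimensional hint
    -- the orbit of `β` lives in `ℚ(β)`
    have hmem : ∀ n, T^[n] β ∈ K := by
      intro n
      induction n with
      | zero => exact IntermediateField.mem_adjoin_simple_self ℚ β
      | succ n ih =>
        rw [(hj n).2.2]
        exact sub_mem (div_mem (zpow_mem (natCast_mem K p) _) ih) (natCast_mem K _)
    let b : ℕ → K := fun n => ⟨T^[n] β, hmem n⟩
    have hb : ∀ n, b (n + 1) = (p : K) ^ (T^[n] β).valuation / b n - (j n : K) := by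
      intro n
      apply Subtype.ext
      change T^[n + 1] β = _
      rw [(hj n).2.2]
      push_cast
      rfl
    have hb0 : ∀ n, b n ≠ 0 := fun n h => h0 n (congrArg Subtype.val h)
    let Ω := PadicAlgCl p
    have hnorm : ∀ x : ℚ_[p], ‖algebraMap ℚ_[p] Ω x‖ = ‖x‖ := PadicAlgCl.norm_extends p
    let u : ℕ → Ω := fun n => (p : Ω) ^ (T^[n] β).valuation
    let a : ℕ → Ω := fun n => algebraMap ℚ_[p] Ω (T^[n] β)
    have ha0 : ∀ n, a n ≠ 0 := fun n => by simpa [a] using h0 n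
    have hna : ∀ n, ‖a n‖ = ‖T^[n] β‖ := fun n => hnorm _
    have ha1 : ∀ n, ‖a n‖ < 1 := fun n => by rw [hna]; exact h1 n
    have hu : ∀ n, ‖u n‖ = ‖a n‖ := fun n => by
      rw [hna, ← norm_pow_valuation (h0 n), ← hnorm]; simp [u]
    have ha : ∀ n, a (n + 1) = u n / a n - (j n : Ω) := fun n => by
      simp only [a, u]; rw [(hj n).2.2]; simp
    have hc : ∀ (σ : K →ₐ[ℚ] Ω) n, σ (b (n + 1)) = u n / σ (b n) - (j n : Ω) := fun σ n => by
      rw [hb]; simp [u]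
    have hev : ∀ σ : K →ₐ[ℚ] Ω, ∃ M, ∀ n, M ≤ n → σ (b n) ≠ a n → ‖σ (b n)‖ = 1 := by
      intro σ
      by_cases hσ : ∀ n, ‖σ (b n)‖ = ‖a n‖
      -- equality of all norms forces `σ β = β`, so the two orbits agree forever
      · have e := eq_of_norm_eq (c := fun n => σ (b n)) (j := fun n => (j n : Ω)) ha0 hu ha (hc σ)
          hσ inv_prime_lt_one (fun m => (hna m).trans_le (norm_le_inv_of_lt_one (h1 m)))
        have e' : ∀ n, σ (b n) = a n := by
          intro n
          induction n with
          | zero => exact e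
          | succ n ih => rw [hc, ha, ih]
        exact ⟨0, fun n _ h => absurd (e' n) h⟩
      · push Not at hσ
        obtain ⟨M, hM⟩ := eventually_norm_one (c := fun n => σ (b n)) (j := fun n => (j n : Ω))
          ha0 hu ha (hc σ) ha1 (fun n => by simpa using hb0 n) hσ
        exact ⟨M, fun n hn _ => hM n hn⟩
    choose M hM using hev
    refine ⟨Finset.univ.sup M, fun n hn => ?_⟩
    have hbint : IsIntegral ℚ (b n) := Algebra.IsIntegral.isIntegral _
    have hmp : minpoly ℚ (T^[n] β) = minpoly ℚ (b n) :=
      minpoly.algebraMap_eq (algebraMap K ℚ_[p]).injective (b n)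
    set P : Polynomial Ω := (minpoly ℚ (b n)).map (algebraMap ℚ Ω) with hP
    have hmonic : P.Monic := (minpoly.monic hbint).map _
    have hroot : ∀ r, r ∈ P.roots ↔ ∃ σ : K →ₐ[ℚ] Ω, σ (b n) = r := by
      intro r
      have := Algebra.IsAlgebraic.range_eval_eq_rootSet_minpoly (F := ℚ) (K := K) Ω (b n)
      have h2 := congrArg (fun S : Set Ω => r ∈ S) this
      simp only [Set.mem_range, eq_iff_iff] at h2
      rw [h2, mem_rootSet', mem_roots hmonic.ne_zero, IsRoot.def, hP, eval_map_algebraMap]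
      exact ⟨fun h => ⟨hmonic.ne_zero, h⟩, fun h => h.2⟩
    have hx : a n ∈ P.roots :=
      (hroot _).2 ⟨((Algebra.ofId ℚ_[p] Ω).restrictScalars ℚ).comp K.val, rfl⟩
    have hroots : ∀ r ∈ P.roots, r ≠ a n → ‖r‖ = 1 := by
      intro r hr hne
      obtain ⟨σ, rfl⟩ := (hroot r).1 hr
      exact hM σ n ((Finset.le_sup (Finset.mem_univ σ)).trans hn) hne
    have hnodup : P.roots.Nodup :=
      nodup_roots ((minpoly.irreducible hbint).separable.map)
    have hfin := coeff_norm_of_roots hmonic (IsAlgClosed.splits P) hnodup hx (ha1 n) hroots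
    have hcoeff : ∀ i, ‖(((minpoly ℚ (T^[n] β)).coeff i : ℚ) : ℚ_[p])‖ = ‖P.coeff i‖ := by
      intro i
      rw [hmp, hP, coeff_map, ← hnorm]
      simp
    simp only [hcoeff]
    exact hfin
end

section
/- Let K ⊂ ℚ_p be a finite extension of ℚ. Then there exists α ∈ K satisfying condition (H) such that K = ℚ(α). Moreover, if z satisfies condition (H) then so does mz for any integer m coprime to p; hence z may be chosen to be an algebraic integer. -/
/-!
Let `β` be a primitive element of `K` with minimal polynomial `f` of degree `n`. Since `f` is
separable, `β` is a simple root, so expanding `f` around a rational `a` very close to `β` and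
rescaling by a suitable power `r` of `p` gives `f (a + r * x) = ∑ i, c i * x ^ i` in which `c 1` is
strictly larger than all other coefficients (`exists_center_scale`). In terms of Newton polygons,
`γ = (β - a) / r` satisfies `‖γ‖ < 1` while all its other conjugates have norm greater than `1`.

The Möbius image `α = γ / (1 + γ)` generates the same field, has norm less than `1`, and its other
conjugates are units, which is what condition (H) asks for. On coefficients: `α` is a root of
`∑ i, c i * X ^ i * (1 - X) ^ (n - i)`, which agrees with `c 1 * X * (1 - X) ^ (n - 1)` up to terms
of norm less than `‖c 1‖` (`moebiusPoly_coeff`). Its leading and linear coefficients thus have norm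
`‖c 1‖`, so it has degree `n`, is a multiple of `minpoly ℚ α`, and dividing by the leading
coefficient yields condition (H) (`condH_of_moebiusPoly`). The argument also covers `n = 1`.

Multiplying `z` by an integer `m` prime to `p` scales the coefficients of its minimal polynomial by
powers of the `p`-adic unit `m`, and the product of the denominators of these coefficients is such
an `m` for which `m * z` is an algebraic integer.
-/


/-- Condition (H) of the paper for `α ∈ pℤ_p` algebraic over ℚ: the minimal
polynomial `x^n + a₁x^{n-1} + ⋯ + a_n` of `α` over ℚ has all coefficients in
`ℤ_p ∩ ℚ`, with `ord_p(a_{n-1}) = 0` (i.e. the coefficient of `x` is a unit) and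
`ord_p(a_n) > 0` (i.e. the constant coefficient lies in `pℤ_p`). -/
def CondH (p : ℕ) [Fact p.Prime] (α : ℚ_[p]) : Prop :=
  ‖α‖ < 1 ∧
  (∀ i : ℕ, ‖(((minpoly ℚ α).coeff i : ℚ) : ℚ_[p])‖ ≤ 1) ∧
  ‖(((minpoly ℚ α).coeff 1 : ℚ) : ℚ_[p])‖ = 1 ∧
  ‖(((minpoly ℚ α).coeff 0 : ℚ) : ℚ_[p])‖ < 1

/-! ### The Möbius transform of a polynomial with dominant linear coefficient -/

open Polynomial in
/-- The degree-`n` homogenization of `∑ i ≤ n, c i * x ^ i`, evaluated at `(X, 1 - X)`. If `γ` is a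
root of `∑ i ≤ n, c i * x ^ i`, then `γ / (1 + γ)` is a root of this polynomial. -/
noncomputable def moebiusPoly (c : ℕ → ℚ) (n : ℕ) : ℚ[X] :=
  ∑ i ∈ Finset.range (n + 1), C (c i) * (X ^ i * (1 - X) ^ (n - i))

open Polynomial

lemma norm_coeff_X_pow_mul_le_one (p : ℕ) [Fact p.Prime] (i k j : ℕ) :
    ‖(((X ^ i * (1 - X) ^ k : ℚ[X]).coeff j : ℚ) : ℚ_[p])‖ ≤ 1 := by
  have h : (X ^ i * (1 - X) ^ k : ℚ[X]) =
      (X ^ i * (1 - X) ^ k : ℤ[X]).map (Int.castRingHom ℚ) := by simp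
  rw [h, coeff_map]
  simpa using Padic.norm_int_le_one (p := p) ((X ^ i * (1 - X) ^ k : ℤ[X]).coeff j)

lemma norm_sum_lt_of_forall_lt (p : ℕ) [Fact p.Prime] {ι : Type*} (s : Finset ι)
    (f : ι → ℚ_[p]) {C : ℝ} (hC : 0 < C) (h : ∀ i ∈ s, ‖f i‖ < C) : ‖∑ i ∈ s, f i‖ < C := by
  classical
  induction s using Finset.induction_on with
  | empty => simpa using hC
  | insert a s ha ih =>
    rw [Finset.sum_insert ha]
    refine (IsUltrametricDist.norm_add_le_max _ _).trans_lt (max_lt (h a (by simp)) (ih ?_))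
    exact fun i hi => h i (by simp [hi])

/-- If `c 1` strictly dominates the other `c i`, then up to strictly smaller terms `moebiusPoly c n`
is `c 1 * X * (1 - X) ^ (n - 1)`. -/
lemma moebiusPoly_coeff (p : ℕ) [Fact p.Prime] (c : ℕ → ℚ) (n : ℕ) (hn : 1 ≤ n)
    (h0 : c 1 ≠ 0) (hc : ∀ i ≤ n, i ≠ 1 → ‖(c i : ℚ_[p])‖ < ‖(c 1 : ℚ_[p])‖) (j : ℕ) :
    ‖((moebiusPoly c n).coeff j : ℚ_[p]) -
      (c 1 : ℚ_[p]) * (((X ^ 1 * (1 - X) ^ (n - 1) : ℚ[X]).coeff j : ℚ) : ℚ_[p])‖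
      < ‖(c 1 : ℚ_[p])‖ := by
  have hmem : 1 ∈ Finset.range (n + 1) := by simp; omega
  have : ((moebiusPoly c n).coeff j : ℚ_[p]) -
      (c 1 : ℚ_[p]) * (((X ^ 1 * (1 - X) ^ (n - 1) : ℚ[X]).coeff j : ℚ) : ℚ_[p]) =
      ∑ i ∈ (Finset.range (n + 1)).erase 1,
        (c i : ℚ_[p]) * (((X ^ i * (1 - X) ^ (n - i) : ℚ[X]).coeff j : ℚ) : ℚ_[p]) := by
    rw [moebiusPoly, ← Finset.add_sum_erase _ _ hmem, coeff_add, finsetSum_coeff]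
    simp only [coeff_C_mul]
    push_cast
    ring
  rw [this]
  have hpos : 0 < ‖(c 1 : ℚ_[p])‖ := norm_pos_iff.2 (Rat.cast_ne_zero.2 h0)
  refine norm_sum_lt_of_forall_lt p _ _ hpos fun i hi => ?_
  rw [Finset.mem_erase, Finset.mem_range] at hi
  rw [norm_mul]
  calc _ ≤ ‖(c i : ℚ_[p])‖ * 1 :=
        mul_le_mul_of_nonneg_left (norm_coeff_X_pow_mul_le_one p _ _ _) (norm_nonneg _)
    _ < _ := by rw [mul_one]; exact hc i (by omega) hi.1

lemma moebiusPoly_natDegree_le (c : ℕ → ℚ) (n : ℕ) : (moebiusPoly c n).natDegree ≤ n := by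
  refine natDegree_sum_le_of_forall_le _ _ fun i hi => ?_
  rw [Finset.mem_range] at hi
  refine (natDegree_C_mul_le _ _).trans (natDegree_mul_le.trans ?_)
  have h1 : ((1 - X : ℚ[X]) ^ (n - i)).natDegree ≤ (n - i) * 1 := by
    refine natDegree_pow_le_of_le _ ?_
    compute_degree
  rw [natDegree_X_pow]
  omega

lemma coeff_top_X_mul (n : ℕ) (hn : 1 ≤ n) :
    (X ^ 1 * (1 - X) ^ (n - 1) : ℚ[X]).coeff n = (-1) ^ (n - 1) := by
  obtain ⟨k, rfl⟩ : ∃ k, n = k + 1 := ⟨n - 1, by omega⟩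
  have h := coeff_pow_of_natDegree_le (p := (1 - X : ℚ[X])) (n := 1) (m := k) (by compute_degree)
  simp only [pow_one, coeff_X_mul, Nat.add_sub_cancel]
  rw [mul_one] at h
  rw [h]
  simp [coeff_one]

lemma coeff_one_X_mul (n : ℕ) : (X ^ 1 * (1 - X) ^ (n - 1) : ℚ[X]).coeff 1 = 1 := by
  rw [pow_one, show (1 : ℕ) = 0 + 1 from rfl, coeff_X_mul]
  simp [coeff_zero_eq_eval_zero]

lemma coeff_zero_X_mul (n : ℕ) : (X ^ 1 * (1 - X) ^ (n - 1) : ℚ[X]).coeff 0 = 0 := by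
  simp [coeff_zero_eq_eval_zero]

lemma norm_eq_of_sub_lt (p : ℕ) [Fact p.Prime] {x y : ℚ_[p]} (h : ‖x - y‖ < ‖y‖) :
    ‖x‖ = ‖y‖ := by
  have := IsUltrametricDist.norm_add_eq_max_of_norm_ne_norm h.ne
  rwa [sub_add_cancel, max_eq_right h.le] at this

/-- The leading and linear coefficients of `moebiusPoly c n` have norm `‖c 1‖`, its constant
coefficient is strictly smaller and no coefficient is larger. As it has degree `n` and root `α`, it
is a scalar multiple of `minpoly ℚ α`, and dividing by the leading coefficient gives `CondH`. -/
lemma condH_of_moebiusPoly (p : ℕ) [Fact p.Prime] (c : ℕ → ℚ) (n : ℕ) (hn : 1 ≤ n)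
    (h0 : c 1 ≠ 0) (hc : ∀ i ≤ n, i ≠ 1 → ‖(c i : ℚ_[p])‖ < ‖(c 1 : ℚ_[p])‖)
    (α : ℚ_[p]) (hα : ‖α‖ < 1) (hint : IsIntegral ℚ α) (hdeg : (minpoly ℚ α).natDegree = n)
    (hroot : aeval α (moebiusPoly c n) = 0) : CondH p α := by
  have hco := moebiusPoly_coeff p c n hn h0 hc
  set G := moebiusPoly c n with hG
  have hpos : 0 < ‖(c 1 : ℚ_[p])‖ := norm_pos_iff.2 (Rat.cast_ne_zero.2 h0)
  have hle : ∀ j, ‖(G.coeff j : ℚ_[p])‖ ≤ ‖(c 1 : ℚ_[p])‖ := fun j => by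
    have h1 := IsUltrametricDist.norm_add_le_max ((G.coeff j : ℚ_[p]) -
      (c 1 : ℚ_[p]) * (((X ^ 1 * (1 - X) ^ (n - 1) : ℚ[X]).coeff j : ℚ) : ℚ_[p]))
      ((c 1 : ℚ_[p]) * (((X ^ 1 * (1 - X) ^ (n - 1) : ℚ[X]).coeff j : ℚ) : ℚ_[p]))
    rw [sub_add_cancel] at h1
    refine h1.trans (max_le (hco j).le ?_)
    rw [norm_mul]
    exact mul_le_of_le_one_right (norm_nonneg _) (norm_coeff_X_pow_mul_le_one p _ _ _)
  have hn' : ‖(G.coeff n : ℚ_[p])‖ = ‖(c 1 : ℚ_[p])‖ := by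
    have h1 := hco n
    rw [coeff_top_X_mul n hn] at h1
    have h2 : ‖(c 1 : ℚ_[p]) * (((-1) ^ (n - 1) : ℚ) : ℚ_[p])‖ = ‖(c 1 : ℚ_[p])‖ := by simp
    rw [← h2] at h1 ⊢
    exact norm_eq_of_sub_lt p h1
  have h1' : ‖(G.coeff 1 : ℚ_[p])‖ = ‖(c 1 : ℚ_[p])‖ := by
    have h1 := hco 1
    rw [coeff_one_X_mul n, Rat.cast_one, mul_one] at h1
    exact norm_eq_of_sub_lt p h1
  have h0' : ‖(G.coeff 0 : ℚ_[p])‖ < ‖(c 1 : ℚ_[p])‖ := by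
    simpa [coeff_zero_X_mul n] using hco 0
  have hne : G.coeff n ≠ 0 := fun h => by
    rw [h, Rat.cast_zero, norm_zero] at hn'
    exact hpos.ne hn'
  have hGdeg : G.natDegree = n :=
    le_antisymm (moebiusPoly_natDegree_le c n) (le_natDegree_of_ne_zero hne)
  have hGeq := eq_leadingCoeff_mul_of_monic_of_dvd_of_natDegree_le (minpoly.monic hint)
    (minpoly.dvd ℚ α hroot) (by rw [hGdeg, hdeg])
  have hlc : ‖(G.leadingCoeff : ℚ_[p])‖ = ‖(c 1 : ℚ_[p])‖ := by
    rw [leadingCoeff, hGdeg, hn']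
  have key : ∀ j, ‖(G.coeff j : ℚ_[p])‖ =
      ‖(c 1 : ℚ_[p])‖ * ‖(((minpoly ℚ α).coeff j : ℚ) : ℚ_[p])‖ := fun j => by
    conv_lhs => rw [hGeq, coeff_C_mul, Rat.cast_mul, norm_mul, hlc]
  refine ⟨hα, fun j => ?_, ?_, ?_⟩
  · have := hle j
    rw [key] at this
    exact le_of_mul_le_mul_left (this.trans_eq (mul_one _).symm) hpos
  · have := h1'
    rw [key] at this
    exact mul_left_cancel₀ hpos.ne' (this.trans (mul_one _).symm)
  · rw [key] at h0'
    exact lt_of_mul_lt_mul_left (h0'.trans_eq (mul_one _).symm) hpos.le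

/-! ### Rational multiples and integrality -/

lemma minpoly_rat_mul (p : ℕ) [Fact p.Prime] (z : ℚ_[p]) (m : ℚ) (hm : m ≠ 0)
    (hz : IsIntegral ℚ z) :
    minpoly ℚ ((m : ℚ_[p]) * z) = (minpoly ℚ z).scaleRoots m := by
  have hmono : ((minpoly ℚ z).scaleRoots m).Monic :=
    (monic_scaleRoots_iff m).2 (minpoly.monic hz)
  have hroot : aeval ((m : ℚ_[p]) * z) ((minpoly ℚ z).scaleRoots m) = 0 := by
    simpa using scaleRoots_aeval_eq_zero (r := m) (minpoly.aeval ℚ z)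
  have hint : IsIntegral ℚ ((m : ℚ_[p]) * z) := ⟨_, hmono, by simpa [aeval_def] using hroot⟩
  refine (eq_of_monic_of_dvd_of_natDegree_le (minpoly.monic hint) hmono
    (minpoly.dvd ℚ _ hroot) ?_).symm
  rw [natDegree_scaleRoots, ← natDegree_scaleRoots (minpoly ℚ ((m : ℚ_[p]) * z)) m⁻¹]
  have h2 : aeval z ((minpoly ℚ ((m : ℚ_[p]) * z)).scaleRoots m⁻¹) = 0 := by
    have := scaleRoots_aeval_eq_zero (r := m⁻¹) (minpoly.aeval ℚ ((m : ℚ_[p]) * z))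
    simpa [hm] using this
  exact natDegree_le_of_dvd (minpoly.dvd ℚ _ h2)
    ((monic_scaleRoots_iff _).2 (minpoly.monic hint)).ne_zero

lemma CondH.isIntegral {p : ℕ} [Fact p.Prime] {z : ℚ_[p]} (h : CondH p z) : IsIntegral ℚ z := by
  by_contra hz
  have := h.2.2.1
  simp [minpoly.eq_zero hz] at this

lemma CondH.int_mul {p : ℕ} [Fact p.Prime] {z : ℚ_[p]} (h : CondH p z) {m : ℤ}
    (hm : ¬ (p : ℤ) ∣ m) : CondH p ((m : ℚ_[p]) * z) := by
  have hm0 : (m : ℚ) ≠ 0 := by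
    rintro h0
    exact hm (by rw [Int.cast_eq_zero.1 h0]; exact dvd_zero _)
  have hnorm : ‖(m : ℚ_[p])‖ = 1 :=
    Padic.norm_intCast_eq_one_iff.2
      (((Nat.prime_iff_prime_int.1 Fact.out).coprime_iff_not_dvd.2 hm).symm)
  have hmin := minpoly_rat_mul p z m hm0 h.isIntegral
  rw [Rat.cast_intCast] at hmin
  have key : ∀ i, ‖(((minpoly ℚ ((m : ℚ_[p]) * z)).coeff i : ℚ) : ℚ_[p])‖ =
      ‖(((minpoly ℚ z).coeff i : ℚ) : ℚ_[p])‖ := fun i => by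
    rw [hmin, coeff_scaleRoots]
    simp [hnorm]
  obtain ⟨h1, h2, h3, h4⟩ := h
  refine ⟨by rwa [norm_mul, hnorm, one_mul], fun i => ?_, ?_, ?_⟩
  · rw [key]; exact h2 i
  · rw [key]; exact h3
  · rw [key]; exact h4

/-- The product of the denominators of the minimal polynomial clears denominators. -/
lemma CondH.exists_isIntegral {p : ℕ} [Fact p.Prime] {z : ℚ_[p]} (h : CondH p z) :
    ∃ m : ℤ, ¬ (p : ℤ) ∣ m ∧ IsIntegral ℤ ((m : ℚ_[p]) * z) := by
  set P := minpoly ℚ z with hP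
  let D : ℕ := ∏ i ∈ Finset.range (P.natDegree + 1), (P.coeff i).den
  have hden : ∀ i, ¬ p ∣ (P.coeff i).den := fun i hd => by
    have h1 := PadicInt.isUnit_den (P.coeff i) (h.2.1 i)
    rw [PadicInt.isUnit_iff] at h1
    have h2 := PadicInt.norm_natCast_lt_one_iff.2 hd
    exact absurd h1 h2.ne
  have hD : ¬ p ∣ D := by
    intro hd
    obtain ⟨i, -, hi⟩ := ((Fact.out : p.Prime).prime.dvd_finsetProd_iff _).1 hd
    exact hden i hi
  refine ⟨D, by exact_mod_cast hD, ?_⟩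
  have hD0 : (D : ℚ) ≠ 0 := by
    rintro h0
    exact hD (by rw [Nat.cast_eq_zero.1 h0]; exact dvd_zero _)
  have hlift : C (D : ℚ) * P ∈ lifts (Int.castRingHom ℚ) := by
    rw [lifts_iff_coeff_lifts]
    intro i
    rw [coeff_C_mul]
    by_cases hi : i ≤ P.natDegree
    · obtain ⟨k, hk⟩ : (P.coeff i).den ∣ D :=
        Finset.dvd_prod_of_mem _ (Finset.mem_range.2 (by omega))
      refine ⟨k * (P.coeff i).num, ?_⟩
      rw [hk]
      push_cast
      rw [mul_right_comm, mul_comm ((P.coeff i).den : ℚ), Rat.mul_den_eq_num]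
      simp [mul_comm]
    · exact ⟨0, by simp [coeff_eq_zero_of_natDegree_lt (not_le.1 hi)]⟩
  obtain ⟨q, hq⟩ := (mem_lifts _).1 hlift
  have hlead : q.leadingCoeff = D := by
    have h1 : (q.map (Int.castRingHom ℚ)).leadingCoeff = D := by
      rw [hq, leadingCoeff_mul, leadingCoeff_C, (minpoly.monic h.isIntegral).leadingCoeff, mul_one]
    rw [leadingCoeff_map_of_injective (Int.castRingHom ℚ).injective_int] at h1
    simpa using (Int.cast_injective (α := ℚ) (by simpa using h1) : q.leadingCoeff = (D : ℤ))
  have hroot : aeval z q = 0 := by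
    have h1 : aeval z (q.map (algebraMap ℤ ℚ)) = aeval z (C (D : ℚ) * P) := by
      rw [← hq]; rfl
    rw [aeval_map_algebraMap] at h1
    rw [h1, map_mul, hP, minpoly.aeval, mul_zero]
  have := isIntegral_leadingCoeff_smul q z hroot
  rw [hlead] at this
  simpa using this

/-! ### Isolating a root and constructing a generator -/

/-- Rescaling near a root: for a simple root `β` of `f` there are a rational centre `a` and a
rational scale `r` such that, in the expansion `f (a + r * x) = ∑ i, c i * x ^ i`, the linear
coefficient strictly dominates the others, and the root `(β - a) / r` has norm less than `1`. -/
lemma exists_center_scale (p : ℕ) [Fact p.Prime] (f : ℚ[X]) (β : ℚ_[p]) (hβ : aeval β f = 0)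
    (hβ' : aeval β (derivative f) ≠ 0) (n : ℕ) :
    ∃ a r : ℚ, r ≠ 0 ∧ ‖β - a‖ < ‖(r : ℚ_[p])‖ ∧
      (taylor a f).coeff 1 * r ^ 1 ≠ 0 ∧
      ∀ i ≤ n, i ≠ 1 → ‖(((taylor a f).coeff i * r ^ i : ℚ) : ℚ_[p])‖ <
        ‖(((taylor a f).coeff 1 * r ^ 1 : ℚ) : ℚ_[p])‖ := by
  have hp0 : (p : ℚ) ≠ 0 := by exact_mod_cast (Fact.out : p.Prime).ne_zero
  have hp0' : (p : ℚ_[p]) ≠ 0 := by exact_mod_cast (Fact.out : p.Prime).ne_zero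
  let t : ℕ → ℚ_[p] → ℚ_[p] := fun i x => aeval x (hasseDeriv i f)
  have ht1 : t 1 β ≠ 0 := by simpa [t, hasseDeriv_one] using hβ'
  have ht0 : t 0 β = 0 := by simpa [t, hasseDeriv_zero] using hβ
  have htc : ∀ i, Continuous (t i) := fun i => by fun_prop
  have hcast : ∀ i (a : ℚ), (((taylor a f).coeff i : ℚ) : ℚ_[p]) = t i a := fun i a => by
    rw [taylor_coeff, ← coe_aeval_eq_eval]
    exact (aeval_algebraMap_apply ℚ_[p] a (hasseDeriv i f)).symm
  -- The scale is a high power of `p`, so that the terms of order at least two become negligible.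
  have hM : ∀ᶠ M : ℕ in Filter.atTop, ∀ i ∈ Finset.range (n + 1), 2 ≤ i →
      ‖t i β * ((p : ℚ_[p]) ^ M) ^ (i - 1)‖ < ‖t 1 β‖ := by
    rw [Filter.eventually_all_finset]
    intro i _
    by_cases h2 : 2 ≤ i
    · have h1 : Filter.Tendsto (fun M : ℕ => ‖t i β * ((p : ℚ_[p]) ^ M) ^ (i - 1)‖)
          Filter.atTop (nhds ‖t i β * 0 ^ (i - 1)‖) :=
        (((tendsto_pow_atTop_nhds_zero_of_norm_lt_one Padic.norm_p_lt_one).pow _).const_mul _).norm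
      rw [zero_pow (by omega), mul_zero, norm_zero] at h1
      filter_upwards [h1.eventually_lt_const (norm_pos_iff.2 ht1)] with M hM _ using hM
    · exact Filter.Eventually.of_forall fun M h => absurd h h2
  obtain ⟨M, hM⟩ := hM.exists
  set ρ : ℚ_[p] := (p : ℚ_[p]) ^ M with hρ
  have hρ0 : ρ ≠ 0 := pow_ne_zero _ hp0'
  -- The required inequalities hold at the centre `β` itself and are open conditions.
  have hβi : ∀ i ∈ Finset.range (n + 1), i ≠ 1 → ‖t i β * ρ ^ i‖ < ‖t 1 β * ρ ^ 1‖ := by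
    intro i hi hi1
    rcases Nat.eq_zero_or_pos i with rfl | hpos
    · rw [ht0, zero_mul, norm_zero]
      exact norm_pos_iff.2 (mul_ne_zero ht1 (pow_ne_zero _ hρ0))
    · have h1 := hM i hi (by omega)
      obtain ⟨k, rfl⟩ : ∃ k, i = k + 1 := ⟨i - 1, by omega⟩
      rw [Nat.add_sub_cancel] at h1
      rw [pow_succ, ← mul_assoc, norm_mul _ ρ, pow_one, norm_mul _ ρ]
      exact mul_lt_mul_of_pos_right h1 (norm_pos_iff.2 hρ0)
  have hnear : ∀ᶠ x in nhds β, ‖β - x‖ < ‖ρ‖ ∧ t 1 x ≠ 0 ∧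
      ∀ i ∈ Finset.range (n + 1), i ≠ 1 → ‖t i x * ρ ^ i‖ < ‖t 1 x * ρ ^ 1‖ := by
    refine Filter.Eventually.and ?_ (Filter.Eventually.and ?_ ?_)
    · refine ContinuousAt.eventually_lt (by fun_prop) (by fun_prop) ?_
      simpa using hρ0
    · exact (htc 1).continuousAt.eventually_ne ht1
    · rw [Filter.eventually_all_finset]
      intro i hi
      by_cases hi1 : i = 1
      · exact Filter.Eventually.of_forall fun x h => absurd hi1 h
      · have hlt := ContinuousAt.eventually_lt
          (((htc i).mul continuous_const).norm.continuousAt (x := β))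
          (((htc 1).mul continuous_const).norm.continuousAt) (hβi i hi hi1)
        filter_upwards [hlt] with x hx _ using hx
  obtain ⟨a, ha1, ha2, ha3⟩ := (Padic.denseRange_ratCast p).exists_mem_open
    isOpen_interior ⟨β, mem_interior_iff_mem_nhds.2 hnear⟩ |>.imp fun a ha => interior_subset ha
  refine ⟨a, (p : ℚ) ^ M, pow_ne_zero _ hp0, by simpa [hρ] using ha1, ?_, fun i hi hi1 => ?_⟩
  · refine mul_ne_zero (fun h => ha2 ?_) (pow_ne_zero _ (pow_ne_zero _ hp0))
    rw [← hcast, h, Rat.cast_zero]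
  · have := ha3 i (Finset.mem_range.2 (by omega)) hi1
    rw [Rat.cast_mul, Rat.cast_mul, hcast, hcast]
    simpa only [Rat.cast_pow, Rat.cast_natCast] using this

lemma aeval_moebiusPoly (p : ℕ) [Fact p.Prime] (f : ℚ[X]) (β : ℚ_[p]) (hβ : aeval β f = 0)
    (a r : ℚ) (hr : r ≠ 0) (γ : ℚ_[p]) (hγ : γ = (β - a) / r) (h1 : 1 + γ ≠ 0) :
    aeval (γ / (1 + γ)) (moebiusPoly (fun i => (taylor a f).coeff i * r ^ i) f.natDegree) = 0 := by
  have hr' : (r : ℚ_[p]) ≠ 0 := by exact_mod_cast hr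
  have hsum : ∑ i ∈ Finset.range (f.natDegree + 1),
      (((taylor a f).coeff i : ℚ) : ℚ_[p]) * (β - a) ^ i = 0 := by
    have h2 : aeval (β - a) (taylor a f) = 0 := by
      rw [taylor_apply, aeval_comp]
      simpa using hβ
    rw [aeval_eq_sum_range' (n := f.natDegree + 1) (by rw [natDegree_taylor]; omega)] at h2
    simpa [Algebra.smul_def] using h2
  have hterm : ∀ i ∈ Finset.range (f.natDegree + 1),
      aeval (γ / (1 + γ)) (C ((taylor a f).coeff i * r ^ i) *
        (X ^ i * (1 - X) ^ (f.natDegree - i)) : ℚ[X]) =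
      (((taylor a f).coeff i : ℚ) : ℚ_[p]) * (β - a) ^ i * ((1 + γ) ^ f.natDegree)⁻¹ := by
    intro i hi
    rw [Finset.mem_range] at hi
    have h3 : (1 : ℚ_[p]) - γ / (1 + γ) = (1 + γ)⁻¹ := by field_simp; ring
    have h4 : β - a = r * γ := by rw [hγ]; field_simp
    have h5 : (1 + γ) ^ f.natDegree = (1 + γ) ^ i * (1 + γ) ^ (f.natDegree - i) := by
      rw [← pow_add]; congr 1; omega
    simp only [map_mul, map_pow, map_sub, map_one, aeval_X, aeval_C, h3, h4, h5,
      eq_ratCast, div_pow, mul_pow, inv_pow, mul_inv]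
    ring
  rw [moebiusPoly, map_sum, Finset.sum_congr rfl hterm, ← Finset.sum_mul, hsum, zero_mul]

open IntermediateField in
/-- Every finite `K ⊂ ℚ_p` is generated by an element satisfying condition (H): for a primitive
element `β`, take `γ / (1 + γ)` with `γ = (β - a) / r` as in `exists_center_scale`. -/
lemma exists_condH (p : ℕ) [Fact p.Prime] (K : IntermediateField ℚ ℚ_[p])
    (hK : FiniteDimensional ℚ K) : ∃ α : ℚ_[p], CondH p α ∧ adjoin ℚ {α} = K := by
  obtain ⟨b, hb⟩ := Field.exists_primitive_element ℚ K
  set β : ℚ_[p] := (b : ℚ_[p]) with hβdef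
  have hβK : adjoin ℚ {β} = K := by
    exact (lift_adjoin_simple ℚ K b).symm.trans
      ((congrArg IntermediateField.lift hb).trans (lift_top ℚ K))
  have hβint : IsIntegral ℚ β := (IsIntegral.of_finite ℚ b).map K.val
  have hroot := minpoly.aeval ℚ β
  have hsep : (minpoly ℚ β).Separable := (minpoly.irreducible hβint).separable
  obtain ⟨a, r, hr, har, hc1, hc⟩ := exists_center_scale p (minpoly ℚ β) β hroot
    (hsep.aeval_derivative_ne_zero hroot) (minpoly ℚ β).natDegree
  have hr' : (r : ℚ_[p]) ≠ 0 := by exact_mod_cast hr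
  set γ : ℚ_[p] := (β - a) / r with hγ
  have hγ1 : ‖γ‖ < 1 := by
    rw [hγ, norm_div, div_lt_one (norm_pos_iff.2 hr')]
    exact har
  have hnorm : ‖1 + γ‖ = 1 := by
    rw [IsUltrametricDist.norm_add_eq_max_of_norm_ne_norm (by rw [norm_one]; exact hγ1.ne'),
      norm_one, max_eq_left hγ1.le]
  have h1 : 1 + γ ≠ 0 := fun h => by simp [h] at hnorm
  have hadj : adjoin ℚ {γ / (1 + γ)} = adjoin ℚ {β} := by
    apply le_antisymm
    · rw [adjoin_simple_le_iff]
      have hβm := mem_adjoin_simple_self ℚ β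
      have hγm : γ ∈ adjoin ℚ {β} :=
        div_mem (sub_mem hβm (SubfieldClass.ratCast_mem _ a)) (SubfieldClass.ratCast_mem _ r)
      exact div_mem hγm (add_mem (one_mem _) hγm)
    · rw [adjoin_simple_le_iff]
      have hαm := mem_adjoin_simple_self ℚ (γ / (1 + γ))
      have hβ : β = a + r * ((γ / (1 + γ)) / (1 - γ / (1 + γ))) := by
        have h3 : (1 : ℚ_[p]) - γ / (1 + γ) = (1 + γ)⁻¹ := by field_simp; ring
        rw [h3, div_inv_eq_mul, div_mul_cancel₀ _ h1, hγ]
        field_simp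
        ring
      rw [hβ]
      exact add_mem (SubfieldClass.ratCast_mem _ a) (mul_mem (SubfieldClass.ratCast_mem _ r)
        (div_mem hαm (sub_mem (one_mem _) hαm)))
  have hαint : IsIntegral ℚ (γ / (1 + γ)) := by
    have hmem : γ / (1 + γ) ∈ K := by
      rw [← hβK, ← hadj]; exact mem_adjoin_simple_self ℚ _
    exact (IsIntegral.of_finite ℚ (⟨_, hmem⟩ : K)).map K.val
  have hdeg : (minpoly ℚ (γ / (1 + γ))).natDegree = (minpoly ℚ β).natDegree := by
    rw [← adjoin.finrank hαint, ← adjoin.finrank hβint, hadj]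
  refine ⟨γ / (1 + γ), ?_, hadj.trans hβK⟩
  refine condH_of_moebiusPoly p (fun i => (taylor a (minpoly ℚ β)).coeff i * r ^ i) _
    (minpoly.natDegree_pos hβint) hc1 hc _ ?_ hαint hdeg
    (aeval_moebiusPoly p _ β hroot a r hr γ hγ h1)
  rwa [norm_div, hnorm, div_one]

/-- Proposition 1 of the paper: every finite extension `K ⊂ ℚ_p` of ℚ contains an
element `α` satisfying condition (H) with `K = ℚ(α)`.  Moreover, if `z` satisfies
condition (H), so does `mz` for any integer `m` coprime to `p`; hence `α` may be
chosen to be an algebraic integer. -/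
theorem stmt_19 (p : ℕ) [Fact p.Prime] (K : IntermediateField ℚ ℚ_[p])
    (hK : FiniteDimensional ℚ K) :
    (∃ α : ℚ_[p], α ∈ K ∧ CondH p α ∧ IntermediateField.adjoin ℚ {α} = K) ∧
    (∀ (z : ℚ_[p]) (m : ℤ), CondH p z → ¬ (p : ℤ) ∣ m →
      CondH p ((m : ℚ_[p]) * z)) ∧
    (∃ α : ℚ_[p], α ∈ K ∧ CondH p α ∧ IntermediateField.adjoin ℚ {α} = K ∧
      IsIntegral ℤ α) := by
  obtain ⟨α, hα, hadj⟩ := exists_condH p K hK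
  have hmem : ∀ {x : ℚ_[p]}, IntermediateField.adjoin ℚ {x} = K → x ∈ K := fun {x} h => by
    rw [← h]; exact IntermediateField.mem_adjoin_simple_self ℚ x
  refine ⟨⟨α, hmem hadj, hα, hadj⟩, fun z m hz hm => hz.int_mul hm, ?_⟩
  obtain ⟨m, hm, hint⟩ := hα.exists_isIntegral
  have hm0 : (m : ℚ_[p]) ≠ 0 := by
    rintro h0
    exact hm (by rw [Int.cast_eq_zero.1 h0]; exact dvd_zero _)
  have hadj' : IntermediateField.adjoin ℚ {(m : ℚ_[p]) * α} = K := by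
    rw [← hadj]
    apply le_antisymm
    · rw [IntermediateField.adjoin_simple_le_iff]
      exact mul_mem (intCast_mem _ m) (IntermediateField.mem_adjoin_simple_self ℚ α)
    · rw [IntermediateField.adjoin_simple_le_iff]
      have h := div_mem (IntermediateField.mem_adjoin_simple_self ℚ ((m : ℚ_[p]) * α))
        (intCast_mem (IntermediateField.adjoin ℚ {(m : ℚ_[p]) * α}) m)
      rwa [mul_div_cancel_left₀ _ hm0] at h
  exact ⟨_, hmem hadj', hα.int_mul hm, hadj', hint⟩
end
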